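/- Little Picard theorem: every holomorphic function f : ℂ → ℂ that omits the two values 0 and 1 is constant. Equivalently, ℂ \ {0,1} is Picard hyperbolic. -/

import Mathlib

/-!
If `f` omits `0` and `1`, then taking a logarithm, a square root and another logarithm gives an
entire `g` with `f = -exp (π i cos g)` (Landau, König). Since `f ≠ 1`, the function `cos ∘ g` omits
the odd integers, so `g` omits a subset of the plane that meets every closed disc of radius `6`.
By Bloch's theorem the image under `g` of a disc of radius `R` and centre `z` contains a disc of
radius proportional to `|g'(z)| R`; letting `R` tend to infinity gives `g'(z) = 0`.
-/

open Complex Metric Set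
open scoped Real

theorem pi_mul_I_ne_zero : (π * I : ℂ) ≠ 0 :=
  mul_ne_zero (ofReal_ne_zero.2 Real.pi_ne_zero) I_ne_zero

theorem neg_exp_pi_mul_I_mul_eq_one_iff {w : ℂ} :
    -exp (π * I * w) = 1 ↔ ∃ n : ℤ, w = 2 * n + 1 := by
  have hshift : -exp (π * I * w) = exp (π * I * (w - 1)) := by
    rw [mul_sub_one, exp_sub, exp_pi_mul_I, div_neg, div_one]
  have hcancel (n : ℤ) : π * I * (w - 1) = n * (2 * π * I) ↔ w = 2 * n + 1 := by
    rw [show (n * (2 * π * I) : ℂ) = π * I * (2 * n) by ring,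
      mul_right_inj' pi_mul_I_ne_zero, sub_eq_iff_eq_add]
  simp only [hshift, exp_eq_one_iff, hcancel]

/-- A holomorphically simply connected domain: a connected open set on which every holomorphic
function has a primitive. This is the property of discs and of the plane that is needed to take
holomorphic logarithms. The empty set is allowed. -/
structure IsHolomorphicallySimplyConnected (U : Set ℂ) : Prop where
  isOpen : IsOpen U
  isPreconnected : IsPreconnected U
  isExactOn : ∀ h : ℂ → ℂ, DifferentiableOn ℂ h U → IsExactOn h U

namespace IsHolomorphicallySimplyConnected

theorem univ : IsHolomorphicallySimplyConnected univ where
  isOpen := isOpen_univ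
  isPreconnected := isPreconnected_univ
  isExactOn _ hh := (differentiableOn_univ.1 hh).isExactOn_univ

variable {U : Set ℂ} {f : ℂ → ℂ}

theorem exists_eq_exp (hU : IsHolomorphicallySimplyConnected U) (hf : DifferentiableOn ℂ f U)
    (h0 : ∀ z ∈ U, f z ≠ 0) :
    ∃ g : ℂ → ℂ, DifferentiableOn ℂ g U ∧ ∀ z ∈ U, f z = exp (g z) := by
  obtain ⟨G, hG⟩ := hU.isExactOn (logDeriv f) ((hf.deriv hU.isOpen).div hf h0)
  have hGd : DifferentiableOn ℂ G U := fun z hz ↦ (hG z hz).differentiableAt.differentiableWithinAt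
  have hlog : EqOn (logDeriv f) (logDeriv fun z ↦ exp (G z)) U := fun z hz ↦ by
    rw [logDeriv_apply (fun z ↦ exp (G z)), (hG z hz).cexp.deriv,
      mul_div_cancel_left₀ _ (exp_ne_zero _)]
  obtain ⟨c, hc, hfc⟩ := (logDeriv_eqOn_iff hf hGd.cexp hU.isOpen hU.isPreconnected
    (fun _ _ ↦ exp_ne_zero _) h0).1 hlog
  refine ⟨fun z ↦ log c + G z, hGd.const_add _, fun z hz ↦ ?_⟩
  rw [hfc hz, exp_add, exp_log hc, Pi.smul_apply, smul_eq_mul]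

theorem exists_eq_sq (hU : IsHolomorphicallySimplyConnected U) (hf : DifferentiableOn ℂ f U)
    (h0 : ∀ z ∈ U, f z ≠ 0) :
    ∃ g : ℂ → ℂ, DifferentiableOn ℂ g U ∧ ∀ z ∈ U, f z = g z ^ 2 := by
  obtain ⟨L, hL, hfL⟩ := hU.exists_eq_exp hf h0
  refine ⟨fun z ↦ exp (L z / 2), (hL.div_const 2).cexp, fun z hz ↦ ?_⟩
  rw [hfL z hz, ← exp_nat_mul, Nat.cast_ofNat, mul_div_cancel₀ _ two_ne_zero]

theorem exists_eq_cos (hU : IsHolomorphicallySimplyConnected U) (hf : DifferentiableOn ℂ f U)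
    (h1 : ∀ z ∈ U, f z ≠ 1) (hneg : ∀ z ∈ U, f z ≠ -1) :
    ∃ g : ℂ → ℂ, DifferentiableOn ℂ g U ∧ ∀ z ∈ U, f z = cos (g z) := by
  obtain ⟨w, hw, hfw⟩ := hU.exists_eq_sq (f := fun z ↦ f z ^ 2 - 1)
    ((hf.pow 2).sub_const 1) fun z hz h ↦
      (sq_eq_one_iff.1 (sub_eq_zero.1 h)).elim (h1 z hz) (hneg z hz)
  have hmul : ∀ z ∈ U, (f z + w z) * (f z - w z) = 1 := fun z hz ↦ by
    linear_combination hfw z hz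
  obtain ⟨L, hL, hfL⟩ := hU.exists_eq_exp (hf.add hw) fun z hz ↦
    left_ne_zero_of_mul_eq_one (hmul z hz)
  refine ⟨fun z ↦ L z / I, hL.div_const I, fun z hz ↦ ?_⟩
  have hexp : exp (L z) = f z + w z := (hfL z hz).symm
  have hexp_neg : exp (-L z) = f z - w z := by
    rw [exp_neg, hexp, inv_eq_of_mul_eq_one_right (hmul z hz)]
  simp only [cos, neg_mul, div_mul_cancel₀ _ I_ne_zero, hexp, hexp_neg]
  ring

theorem exists_eq_neg_exp_pi_mul_I_mul_cos (hU : IsHolomorphicallySimplyConnected U)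
    (hf : DifferentiableOn ℂ f U) (h0 : ∀ z ∈ U, f z ≠ 0) (h1 : ∀ z ∈ U, f z ≠ 1) :
    ∃ g : ℂ → ℂ, DifferentiableOn ℂ g U ∧ ∀ z ∈ U, f z = -exp (π * I * cos (g z)) := by
  obtain ⟨L, hL, hfL⟩ := hU.exists_eq_exp hf.neg fun z hz ↦ neg_ne_zero.2 (h0 z hz)
  have hfh : ∀ z ∈ U, f z = -exp (π * I * (L z / (π * I))) := fun z hz ↦ by
    rw [mul_div_cancel₀ _ pi_mul_I_ne_zero, ← hfL z hz, Pi.neg_apply, neg_neg]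
  have hodd : ∀ z ∈ U, ∀ n : ℤ, L z / (π * I) ≠ 2 * n + 1 := fun z hz n hn ↦
    h1 z hz ((hfh z hz).trans (neg_exp_pi_mul_I_mul_eq_one_iff.2 ⟨n, hn⟩))
  obtain ⟨g, hg, hLg⟩ := hU.exists_eq_cos (hL.div_const (π * I))
    (fun z hz h ↦ hodd z hz 0 (h.trans (by norm_num)))
    (fun z hz h ↦ hodd z hz (-1) (h.trans (by norm_num)))
  exact ⟨g, hg, fun z hz ↦ by rw [hfh z hz, hLg z hz]⟩

end IsHolomorphicallySimplyConnected

section Bloch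

theorem norm_sub_mul_norm_sub_le_norm_image_sub {𝕜 E : Type*} [RCLike 𝕜] [NormedAddCommGroup E]
    [NormedSpace 𝕜 E] {g g' : 𝕜 → E} {s : Set 𝕜} {a : E} {c : ℝ} {x y : 𝕜}
    (hs : Convex ℝ s) (hg : ∀ z ∈ s, HasDerivWithinAt g (g' z) s z)
    (hc : ∀ z ∈ s, ‖g' z - a‖ ≤ c) (hx : x ∈ s) (hy : y ∈ s) :
    (‖a‖ - c) * ‖y - x‖ ≤ ‖g y - g x‖ := by
  have herr : ‖(g y - y • a) - (g x - x • a)‖ ≤ c * ‖y - x‖ :=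
    hs.norm_image_sub_le_of_norm_hasDerivWithin_le
      (fun z hz ↦ by simpa using (hg z hz).sub ((hasDerivWithinAt_id z s).smul_const a)) hc hx hy
  calc (‖a‖ - c) * ‖y - x‖ = ‖(y - x) • a‖ - c * ‖y - x‖ := by rw [norm_smul]; ring
    _ ≤ ‖(y - x) • a‖ - ‖(g y - y • a) - (g x - x • a)‖ := by gcongr
    _ ≤ ‖(y - x) • a + ((g y - y • a) - (g x - x • a))‖ := norm_sub_le_norm_add _ _
    _ = ‖g y - g x‖ := by congr 1; module

variable {g : ℂ → ℂ}

theorem ball_subset_image_closedBall_of_norm_deriv_sub_le {p a : ℂ} {c s : ℝ} (hs : 0 < s)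
    (hca : c < ‖a‖) (hg : ∀ z ∈ closedBall p s, DifferentiableAt ℂ g z)
    (hc : ∀ z ∈ closedBall p s, ‖deriv g z - a‖ ≤ c) :
    ball (g p) ((‖a‖ - c) * s / 2) ⊆ g '' closedBall p s := by
  have hp : p ∈ closedBall p s := mem_closedBall_self hs.le
  have hexpand : ∀ z ∈ sphere p s, (‖a‖ - c) * s ≤ ‖g z - g p‖ := fun z hz ↦ by
    simpa only [mem_sphere_iff_norm.1 hz] using norm_sub_mul_norm_sub_le_norm_image_sub
      (convex_closedBall p s) (fun x hx ↦ (hg x hx).hasDerivAt.hasDerivWithinAt) hc hp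
      (sphere_subset_closedBall hz)
  have hderiv : deriv g p ≠ 0 := fun h ↦ by
    simpa [h] using (hc p hp).trans_lt hca
  have hdiff : DifferentiableOn ℂ g (closedBall p s) := fun z hz ↦ (hg z hz).differentiableWithinAt
  exact hdiff.diffContOnCl_ball subset_rfl |>.ball_subset_image_closedBall hs hexpand
    (((hg p hp).hasDerivAt.eventually_ne hderiv).frequently.filter_mono nhdsWithin_le_nhds)

theorem ball_subset_image_ball_of_norm_deriv_le {p : ℂ} {t K : ℝ} (ht : 0 < t)
    (hg : DifferentiableOn ℂ g (ball p t))
    (hK : ∀ z ∈ ball p t, ‖deriv g z‖ ≤ K * ‖deriv g p‖) :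
    ball (g p) (‖deriv g p‖ * t / (16 * K)) ⊆ g '' ball p t := by
  rcases eq_or_ne (deriv g p) 0 with h | h
  · simp [h]
  have ha : 0 < ‖deriv g p‖ := norm_pos_iff.2 h
  have hK1 : 1 ≤ K := le_of_mul_le_mul_right (by simpa using hK p (mem_ball_self ht)) ha
  have hst : closedBall p (t / (4 * K)) ⊆ ball p t :=
    closedBall_subset_ball (div_lt_self ht (by linarith))
  have hmaps : MapsTo (deriv g) (ball p t) (closedBall (deriv g p) (2 * K * ‖deriv g p‖)) := by
    intro z hz
    rw [mem_closedBall_iff_norm]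
    calc ‖deriv g z - deriv g p‖ ≤ ‖deriv g z‖ + ‖deriv g p‖ := norm_sub_le _ _
      _ ≤ K * ‖deriv g p‖ + K * ‖deriv g p‖ := add_le_add (hK z hz) (hK p (mem_ball_self ht))
      _ = 2 * K * ‖deriv g p‖ := by ring
  have hclose : ∀ z ∈ closedBall p (t / (4 * K)), ‖deriv g z - deriv g p‖ ≤ ‖deriv g p‖ / 2 := by
    intro z hz
    calc ‖deriv g z - deriv g p‖ ≤ 2 * K * ‖deriv g p‖ / t * dist z p := by
          rw [← dist_eq_norm]
          exact dist_le_div_mul_dist_of_mapsTo_ball (hg.deriv isOpen_ball) hmaps (hst hz)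
      _ ≤ 2 * K * ‖deriv g p‖ / t * (t / (4 * K)) := by gcongr; exact hz
      _ = ‖deriv g p‖ / 2 := by field_simp; norm_num
  have hsub := ball_subset_image_closedBall_of_norm_deriv_sub_le (by positivity) (half_lt_self ha)
    (fun z hz ↦ hg.differentiableAt (isOpen_ball.mem_nhds (hst hz))) hclose
  have hrad : ‖deriv g p‖ * t / (16 * K) = (‖deriv g p‖ - ‖deriv g p‖ / 2) * (t / (4 * K)) / 2 := by
    field_simp; norm_num
  exact hrad ▸ hsub.trans (image_mono hst)

theorem exists_ball_subset_image_ball {z₀ : ℂ} {R : ℝ} (hR : 0 < R)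
    (hg : DifferentiableOn ℂ g (ball z₀ R)) :
    ∃ w, ball w (‖deriv g z₀‖ * R / 128) ⊆ g '' ball z₀ R := by
  have hsub : closedBall z₀ (3 * R / 4) ⊆ ball z₀ R := closedBall_subset_ball (by linarith)
  have hcont : Continuous fun z : closedBall z₀ (3 * R / 4) ↦ ‖deriv g z‖ :=
    (((hg.deriv isOpen_ball).continuousOn.mono hsub).domRestrict).norm
  have : CompleteSpace (closedBall z₀ (3 * R / 4)) := isClosed_closedBall.completeSpace_coe
  -- Hofer's lemma gives a disc on which `‖g'‖` is at most twice its value at the centre `p`, at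
  -- no loss in the product of the radius and the derivative at the centre.
  obtain ⟨t, ht, ⟨p, _⟩, htR, hpz, hprod, hdouble⟩ := hofer
    (⟨z₀, mem_closedBall_self (by positivity)⟩ : closedBall z₀ (3 * R / 4)) (R / 4) (by positivity)
    hcont fun _ ↦ norm_nonneg _
  simp only [Subtype.dist_eq, Subtype.forall] at hpz hprod hdouble
  have hpt : ball p t ⊆ closedBall z₀ (3 * R / 4) :=
    ball_subset_closedBall.trans (closedBall_subset_closedBall' (by linarith))
  have hball := ball_subset_image_ball_of_norm_deriv_le ht (hg.mono (hpt.trans hsub))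
    fun z hz ↦ hdouble z (hpt hz) (mem_ball'.1 hz).le
  exact ⟨g p, (ball_subset_ball (by linarith)).trans (hball.trans (image_mono (hpt.trans hsub)))⟩

end Bloch

theorem exists_cosh_eq_odd_of_nonneg {x : ℝ} (hx : 0 ≤ x) :
    ∃ y : ℝ, |x - y| ≤ 2 ∧ ∃ n : ℤ, Real.cosh y = 2 * n + 1 := by
  have hgrowth : Real.cosh x + 2 ≤ Real.cosh (x + 2) := by
    have hcosh2 : 3 ≤ Real.cosh 2 := by
      have hsinh1 : 1 ≤ Real.sinh 1 := Real.self_le_sinh_iff.2 zero_le_one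
      have htwo := Real.cosh_two_mul 1
      rw [Real.cosh_sq, mul_one] at htwo
      nlinarith
    have hsinh : 0 ≤ Real.sinh x * Real.sinh 2 :=
      mul_nonneg (Real.sinh_nonneg_iff.2 hx) (Real.sinh_nonneg_iff.2 zero_le_two)
    rw [Real.cosh_add]
    nlinarith [Real.one_le_cosh x]
  obtain ⟨y, hy, hyn⟩ : (2 * ⌈(Real.cosh x - 1) / 2⌉ + 1 : ℝ) ∈ Real.cosh '' Icc x (x + 2) := by
    refine intermediate_value_Icc (by linarith) Real.continuous_cosh.continuousOn ⟨?_, ?_⟩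
    · linarith [Int.le_ceil ((Real.cosh x - 1) / 2)]
    · linarith [Int.ceil_lt_add_one ((Real.cosh x - 1) / 2)]
  exact ⟨y, abs_le.2 ⟨by linarith [hy.2], by linarith [hy.1]⟩, _, hyn⟩

theorem exists_cosh_eq_odd (x : ℝ) :
    ∃ y : ℝ, |x - y| ≤ 2 ∧ ∃ n : ℤ, Real.cosh y = 2 * n + 1 := by
  rcases le_total 0 x with hx | hx
  · exact exists_cosh_eq_odd_of_nonneg hx
  · obtain ⟨y, hy, n, hn⟩ := exists_cosh_eq_odd_of_nonneg (neg_nonneg.2 hx)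
    exact ⟨-y, by rwa [← abs_neg, neg_sub', neg_neg], n, by rwa [Real.cosh_neg]⟩

theorem exists_mem_closedBall_cos_eq_odd (w : ℂ) :
    ∃ v ∈ closedBall w 6, ∃ n : ℤ, cos v = 2 * n + 1 := by
  obtain ⟨m, hm, -⟩ := existsUnique_sub_zsmul_mem_Ico Real.two_pi_pos w.re (-π)
  obtain ⟨y, hy, n, hn⟩ := exists_cosh_eq_odd w.im
  refine ⟨y * I + m * (2 * π), ?_, n, ?_⟩
  · have hre : |w.re - m * (2 * π)| ≤ 4 := by
      rw [zsmul_eq_mul] at hm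
      exact abs_le.2 ⟨by linarith [hm.1, Real.pi_le_four], by linarith [hm.2, Real.pi_le_four]⟩
    rw [mem_closedBall', dist_eq]
    calc ‖w - (y * I + m * (2 * π))‖ ≤ |w.re - m * (2 * π)| + |w.im - y| := by
          simpa using norm_le_abs_re_add_abs_im (w - (y * I + m * (2 * π)))
      _ ≤ 6 := by linarith
  · rw [cos_add_int_mul_two_pi, cos_mul_I]
    exact_mod_cast congrArg ofReal hn

theorem norm_deriv_mul_le_of_cos_ne_odd {g : ℂ → ℂ} {z₀ : ℂ} {R : ℝ} (hR : 0 < R)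
    (hg : DifferentiableOn ℂ g (ball z₀ R))
    (hodd : ∀ z ∈ ball z₀ R, ∀ n : ℤ, cos (g z) ≠ 2 * n + 1) :
    ‖deriv g z₀‖ * R ≤ 768 := by
  by_contra! hlarge
  obtain ⟨w, hw⟩ := exists_ball_subset_image_ball hR hg
  obtain ⟨v, hv, n, hn⟩ := exists_mem_closedBall_cos_eq_odd w
  obtain ⟨z, hz, rfl⟩ := hw (closedBall_subset_ball (by linarith) hv)
  exact hodd z hz n hn

theorem deriv_eq_zero_of_cos_ne_odd {g : ℂ → ℂ} (hg : Differentiable ℂ g)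
    (hodd : ∀ z, ∀ n : ℤ, cos (g z) ≠ 2 * n + 1) (z₀ : ℂ) : deriv g z₀ = 0 := by
  by_contra hne
  have hpos : 0 < ‖deriv g z₀‖ := norm_pos_iff.2 hne
  have hle := norm_deriv_mul_le_of_cos_ne_odd (z₀ := z₀) (R := 769 / ‖deriv g z₀‖) (by positivity)
    hg.differentiableOn fun z _ ↦ hodd z
  rw [mul_div_cancel₀ _ hpos.ne'] at hle
  norm_num at hle

/-- Little Picard theorem: an entire function omitting `0` and `1` is constant. -/
theorem little_picard (f : ℂ → ℂ) (hf : Differentiable ℂ f)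
    (h0 : ∀ z : ℂ, f z ≠ 0) (h1 : ∀ z : ℂ, f z ≠ 1) :
    ∃ c : ℂ, ∀ z : ℂ, f z = c := by
  obtain ⟨g, hg, hfg⟩ :=
    IsHolomorphicallySimplyConnected.univ.exists_eq_neg_exp_pi_mul_I_mul_cos
      hf.differentiableOn (fun z _ ↦ h0 z) (fun z _ ↦ h1 z)
  rw [differentiableOn_univ] at hg
  have hodd : ∀ z, ∀ n : ℤ, cos (g z) ≠ 2 * n + 1 := fun z n hn ↦
    h1 z ((hfg z (mem_univ z)).trans (neg_exp_pi_mul_I_mul_eq_one_iff.2 ⟨n, hn⟩))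
  have hconst : ∀ z, g z = g 0 := fun z ↦
    is_const_of_deriv_eq_zero hg (deriv_eq_zero_of_cos_ne_odd hg hodd) z 0
  exact ⟨f 0, fun z ↦ by rw [hfg z (mem_univ z), hfg 0 (mem_univ 0), hconst z]⟩
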